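/- (Conditional Carathéodory extension theorem.) Let X be a stable set of functions on Ω, 𝒳 a stable ring on X, and μ : 𝒳 → L̄⁰₊ a stable pre-measure. Then there exists a stable measure ν : Σ(𝒳) → L̄⁰₊ on the stable σ-algebra generated by 𝒳 which coincides with μ on 𝒳. -/

import Mathlib

/-!
Common framework for conditional set theory and conditional measure theory
in the sense of Drapeau–Jamneshan–Karliczek–Kupper, specialized to the
measure algebra associated to a probability space `(Ω, F, P)`.

Functions on `Ω` are identified when they agree `P`-a.s., and measurable sets
are identified when their symmetric difference is a null set.  Conditional
subsets of a stable set `X` are represented by raw pairs `(V, A)` consisting of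
a set of functions and a (measurable) base set; all notions are formulated with
respect to the almost-sure identifications via the relations `cle` and `ceq`.
-/

open MeasureTheory Filter Set Topology
open scoped ENNReal

noncomputable section

namespace CondMT

variable {Ω E F' : Type*}

/-- A countable partition of `Ω` into measurable sets (modulo `P`-null sets). -/
structure Partition {Ω : Type*} (mΩ : MeasurableSpace Ω) (P : @Measure Ω mΩ) where
  part : ℕ → Set Ω
  meas : ∀ k, MeasurableSet[mΩ] (part k)
  disj : ∀ i j, i ≠ j → P (part i ∩ part j) = 0
  cover : P ((⋃ k, part k)ᶜ) = 0

variable {mΩ : MeasurableSpace Ω}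

open Classical in
/-- The concatenation `∑ x_k|A_k` of a sequence of functions along a partition:
the (a.s. unique) function equal to `x_k` on `A_k` for every `k`. -/
def Partition.concat {P : @Measure Ω mΩ} (A : Partition mΩ P) (x : ℕ → Ω → E) : Ω → E :=
  fun ω => if h : ∃ k, ω ∈ A.part k then x (Nat.find h) ω else x 0 ω

/-- A stable set of functions on `Ω`: nonempty, closed under a.s. modification and
closed under countable concatenations along partitions. -/
def Stable (P : @Measure Ω mΩ) (X : Set (Ω → E)) : Prop :=
  X.Nonempty ∧ (∀ x ∈ X, ∀ y, x =ᵐ[P] y → y ∈ X) ∧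
    ∀ (A : Partition mΩ P) (x : ℕ → Ω → E), (∀ k, x k ∈ X) → A.concat x ∈ X

/-- Raw data of a conditional subset `V|A`: the carrier `V` and the base set `A`. -/
abbrev CondRaw (Ω E : Type*) := Set (Ω → E) × Set Ω

/-- `S` represents a conditional subset of the stable set `X`: the carrier is a
stable subset of `X` and the base is measurable. -/
def IsCond (P : @Measure Ω mΩ) (X : Set (Ω → E)) (S : CondRaw Ω E) : Prop :=
  Stable P S.1 ∧ S.1 ⊆ X ∧ MeasurableSet[mΩ] S.2

/-- Conditional inclusion `V|A ⊑ W|B`: `A ⊆ B` a.s., and every `x|A`, `x ∈ V`,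
coincides a.s. on `A` with some `y|A`, `y ∈ W`. -/
def cle (P : @Measure Ω mΩ) (S T : CondRaw Ω E) : Prop :=
  P (S.2 \ T.2) = 0 ∧ ∀ x ∈ S.1, ∃ y ∈ T.1, ∀ᵐ ω ∂P, ω ∈ S.2 → x ω = y ω

/-- Identification of conditional subsets (equality in the conditional power set). -/
def ceq (P : @Measure Ω mΩ) (S T : CondRaw Ω E) : Prop := cle P S T ∧ cle P T S

/-- `x|C ∈ V|C`: the restriction of `x` to `C` agrees a.s. on `C` with an element of `V`. -/
def memOn (P : @Measure Ω mΩ) (C : Set Ω) (x : Ω → E) (V : Set (Ω → E)) : Prop :=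
  ∃ y ∈ V, ∀ᵐ ω ∂P, ω ∈ C → x ω = y ω

/-- `∑ V_k|A_k`, the set of concatenations of sequences taken from the `V_k`. -/
def concatSet (P : @Measure Ω mΩ) (A : Partition mΩ P) (V : ℕ → Set (Ω → E)) :
    Set (Ω → E) :=
  {f | ∃ x : ℕ → Ω → E, (∀ k, x k ∈ V k) ∧ f =ᵐ[P] A.concat x}

/-- Countable concatenation `∑ (V_k|B_k)|A_k := (∑ V_k|A_k)|⋃ (A_k ∩ B_k)` in the
conditional power set. -/
def condConcat (P : @Measure Ω mΩ) (A : Partition mΩ P) (S : ℕ → CondRaw Ω E) :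
    CondRaw Ω E :=
  (concatSet P A fun k => (S k).1, ⋃ k, A.part k ∩ (S k).2)

/-- Restriction `(V|A)|B := V|(A ∩ B)`. -/
def crestrict (S : CondRaw Ω E) (B : Set Ω) : CondRaw Ω E := (S.1, S.2 ∩ B)

/-- The degenerate conditional subset `X|∅ = {∗}`, the least element of `P(X)`. -/
def cbot (X : Set (Ω → E)) : CondRaw Ω E := (X, (∅ : Set Ω))

/-- The greatest element `X = X|Ω` of `P(X)`. -/
def ctop (X : Set (Ω → E)) : CondRaw Ω E := (X, (univ : Set Ω))

/-- `a` is a supremum (conditional union) of the family `s` in `(P(X), ⊑)`. -/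
def IsSupOf (P : @Measure Ω mΩ) (X : Set (Ω → E)) (s : Set (CondRaw Ω E))
    (a : CondRaw Ω E) : Prop :=
  IsCond P X a ∧ (∀ b ∈ s, cle P b a) ∧
    ∀ c, IsCond P X c → (∀ b ∈ s, cle P b c) → cle P a c

/-- `a` is an infimum (conditional intersection) of the family `s` in `(P(X), ⊑)`. -/
def IsInfOf (P : @Measure Ω mΩ) (X : Set (Ω → E)) (s : Set (CondRaw Ω E))
    (a : CondRaw Ω E) : Prop :=
  IsCond P X a ∧ (∀ b ∈ s, cle P a b) ∧
    ∀ c, IsCond P X c → (∀ b ∈ s, cle P c b) → cle P c a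

open Classical in
/-- The conditional union (supremum) of a family of conditional subsets. -/
def cSup (P : @Measure Ω mΩ) (X : Set (Ω → E)) (s : Set (CondRaw Ω E)) : CondRaw Ω E :=
  if h : ∃ a, IsSupOf P X s a then h.choose else ctop X

open Classical in
/-- The conditional intersection (infimum) of a family of conditional subsets. -/
def cInf (P : @Measure Ω mΩ) (X : Set (Ω → E)) (s : Set (CondRaw Ω E)) : CondRaw Ω E :=
  if h : ∃ a, IsInfOf P X s a then h.choose else ctop X

/-- Binary conditional union. -/
def cSup₂ (P : @Measure Ω mΩ) (X : Set (Ω → E)) (a b : CondRaw Ω E) : CondRaw Ω E :=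
  cSup P X {a, b}

/-- Binary conditional intersection. -/
def cInf₂ (P : @Measure Ω mΩ) (X : Set (Ω → E)) (a b : CondRaw Ω E) : CondRaw Ω E :=
  cInf P X {a, b}

/-- Conditional union of an indexed family. -/
def cSupFam (P : @Measure Ω mΩ) (X : Set (Ω → E)) {ι : Sort*}
    (S : ι → CondRaw Ω E) : CondRaw Ω E :=
  cSup P X (range S)

/-- Conditional intersection of an indexed family. -/
def cInfFam (P : @Measure Ω mΩ) (X : Set (Ω → E)) {ι : Sort*}
    (S : ι → CondRaw Ω E) : CondRaw Ω E :=
  cInf P X (range S)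

/-- Disjointness of conditional subsets: `V|A ⊓ W|B = {∗}`. -/
def cdisjoint (P : @Measure Ω mΩ) (X : Set (Ω → E)) (a b : CondRaw Ω E) : Prop :=
  ceq P (cInf₂ P X a b) (cbot X)

/-- The conditional complement `(V|A)^⊏ := ⊔ {W|B : W|B ⊓ V|A = {∗}}`. -/
def ccompl (P : @Measure Ω mΩ) (X : Set (Ω → E)) (a : CondRaw Ω E) : CondRaw Ω E :=
  cSup P X {b | IsCond P X b ∧ cdisjoint P X b a}

open Classical in
/-- The largest measurable set (mod null sets) satisfying a property `Φ`,
obtained by an exhaustion argument; junk value `∅` if there is none. -/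
def largestSet (P : @Measure Ω mΩ) (Φ : Set Ω → Prop) : Set Ω :=
  if h : ∃ C, MeasurableSet[mΩ] C ∧ Φ C ∧
      ∀ C', MeasurableSet[mΩ] C' → Φ C' → P (C' \ C) = 0
  then h.choose else ∅

open Classical in
/-- The smallest measurable set (mod null sets) satisfying a property `Φ`. -/
def smallestSet (P : @Measure Ω mΩ) (Φ : Set Ω → Prop) : Set Ω :=
  if h : ∃ C, MeasurableSet[mΩ] C ∧ Φ C ∧
      ∀ C', MeasurableSet[mΩ] C' → Φ C' → P (C \ C') = 0
  then h.choose else univ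

/-- Essential infimum `inf_i A_i` of a family of measurable sets in the measure algebra. -/
def essInfFam (P : @Measure Ω mΩ) {ι : Sort*} (A : ι → Set Ω) : Set Ω :=
  largestSet P fun C => ∀ i, P (C \ A i) = 0

/-- Essential supremum `sup_i A_i` of a family of measurable sets in the measure algebra. -/
def essSupFam (P : @Measure Ω mΩ) {ι : Sort*} (A : ι → Set Ω) : Set Ω :=
  smallestSet P fun C => ∀ i, P (A i \ C) = 0

/-- A stable collection: a nonempty, `ceq`-saturated family of conditional subsets of `X`
closed under countable concatenations. -/
def IsStableColl (P : @Measure Ω mΩ) (X : Set (Ω → E)) (𝒞 : Set (CondRaw Ω E)) : Prop :=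
  𝒞.Nonempty ∧ (∀ S ∈ 𝒞, IsCond P X S) ∧
    (∀ S ∈ 𝒞, ∀ T, IsCond P X T → ceq P S T → T ∈ 𝒞) ∧
    ∀ (A : Partition mΩ P) (S : ℕ → CondRaw Ω E), (∀ k, S k ∈ 𝒞) → condConcat P A S ∈ 𝒞

/-- A stable σ-algebra on `X`. -/
def IsStableSigma (P : @Measure Ω mΩ) (X : Set (Ω → E)) (𝒳 : Set (CondRaw Ω E)) : Prop :=
  IsStableColl P X 𝒳 ∧ ctop X ∈ 𝒳 ∧ (∀ S ∈ 𝒳, ccompl P X S ∈ 𝒳) ∧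
    ∀ S : ℕ → CondRaw Ω E, (∀ k, S k ∈ 𝒳) → cSupFam P X S ∈ 𝒳

/-- A stable Dynkin system on `X`. -/
def IsStableDynkin (P : @Measure Ω mΩ) (X : Set (Ω → E)) (𝒟 : Set (CondRaw Ω E)) : Prop :=
  IsStableColl P X 𝒟 ∧ ctop X ∈ 𝒟 ∧ (∀ S ∈ 𝒟, ccompl P X S ∈ 𝒟) ∧
    ∀ S : ℕ → CondRaw Ω E, (∀ k, S k ∈ 𝒟) →
      (∀ i j, i ≠ j → cdisjoint P X (S i) (S j)) → cSupFam P X S ∈ 𝒟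

/-- A stable ring on `X`. -/
def IsStableRing (P : @Measure Ω mΩ) (X : Set (Ω → E)) (𝒳 : Set (CondRaw Ω E)) : Prop :=
  IsStableColl P X 𝒳 ∧
    ∀ S ∈ 𝒳, ∀ T ∈ 𝒳, cInf₂ P X S (ccompl P X T) ∈ 𝒳 ∧ cSup₂ P X S T ∈ 𝒳

/-- The stable σ-algebra generated by a collection `ℰ`. -/
def sigmaGen (P : @Measure Ω mΩ) (X : Set (Ω → E)) (ℰ : Set (CondRaw Ω E)) :
    Set (CondRaw Ω E) :=
  ⋂₀ {𝒳 | IsStableSigma P X 𝒳 ∧ ℰ ⊆ 𝒳}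

/-- The stable Dynkin system generated by a collection `ℰ`. -/
def dynkinGen (P : @Measure Ω mΩ) (X : Set (Ω → E)) (ℰ : Set (CondRaw Ω E)) :
    Set (CondRaw Ω E) :=
  ⋂₀ {𝒟 | IsStableDynkin P X 𝒟 ∧ ℰ ⊆ 𝒟}

/-! ### Stable set functions and stable measures -/

/-- A stable set function `μ : 𝒞 → L̄⁰₊` (represented by measurable representatives,
well defined modulo identification, and commuting with countable concatenations). -/
def IsStableSetFun (P : @Measure Ω mΩ) (𝒞 : Set (CondRaw Ω E))
    (μ : CondRaw Ω E → Ω → ℝ≥0∞) : Prop :=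
  (∀ S ∈ 𝒞, Measurable[mΩ] (μ S)) ∧
    (∀ S ∈ 𝒞, ∀ T ∈ 𝒞, ceq P S T → μ S =ᵐ[P] μ T) ∧
    ∀ (A : Partition mΩ P) (S : ℕ → CondRaw Ω E), (∀ k, S k ∈ 𝒞) →
      μ (condConcat P A S) =ᵐ[P] A.concat fun k => μ (S k)

/-- Property (M1): `μ(V|A) = μ(V|A)|A + 0|Aᶜ`. -/
def M1 (P : @Measure Ω mΩ) (𝒞 : Set (CondRaw Ω E)) (μ : CondRaw Ω E → Ω → ℝ≥0∞) : Prop :=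
  ∀ S ∈ 𝒞, μ S =ᵐ[P] S.2.indicator (μ S)

/-- Property (M2): countable additivity on pairwise disjoint sequences whose
conditional union belongs to the domain. -/
def M2 (P : @Measure Ω mΩ) (X : Set (Ω → E)) (𝒳 : Set (CondRaw Ω E))
    (μ : CondRaw Ω E → Ω → ℝ≥0∞) : Prop :=
  ∀ S : ℕ → CondRaw Ω E, (∀ k, S k ∈ 𝒳) →
    (∀ i j, i ≠ j → cdisjoint P X (S i) (S j)) → cSupFam P X S ∈ 𝒳 →
    μ (cSupFam P X S) =ᵐ[P] fun ω => ∑' k, μ (S k) ω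

/-- Finite additivity: (M2) for finite pairwise disjoint families. -/
def FinAdd (P : @Measure Ω mΩ) (X : Set (Ω → E)) (𝒳 : Set (CondRaw Ω E))
    (μ : CondRaw Ω E → Ω → ℝ≥0∞) : Prop :=
  ∀ (n : ℕ) (S : Fin n → CondRaw Ω E), (∀ k, S k ∈ 𝒳) →
    (∀ i j, i ≠ j → cdisjoint P X (S i) (S j)) → cSupFam P X S ∈ 𝒳 →
    μ (cSupFam P X S) =ᵐ[P] fun ω => ∑ k, μ (S k) ω

/-- A stable measure (or stable pre-measure, when the domain is merely a stable
ring): a stable set function satisfying (M1) and (M2). -/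
def IsStableMeasureOn (P : @Measure Ω mΩ) (X : Set (Ω → E)) (𝒳 : Set (CondRaw Ω E))
    (μ : CondRaw Ω E → Ω → ℝ≥0∞) : Prop :=
  IsStableSetFun P 𝒳 μ ∧ M1 P 𝒳 μ ∧ M2 P X 𝒳 μ

/-- A finite stable measure. -/
def IsFiniteStableMeasureOn (P : @Measure Ω mΩ) (X : Set (Ω → E))
    (𝒳 : Set (CondRaw Ω E)) (μ : CondRaw Ω E → Ω → ℝ≥0∞) : Prop :=
  IsStableMeasureOn P X 𝒳 μ ∧ ∀ᵐ ω ∂P, μ (ctop X) ω < ∞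

/-- A stable probability measure. -/
def IsStableProbOn (P : @Measure Ω mΩ) (X : Set (Ω → E)) (𝒳 : Set (CondRaw Ω E))
    (μ : CondRaw Ω E → Ω → ℝ≥0∞) : Prop :=
  IsStableMeasureOn P X 𝒳 μ ∧ μ (ctop X) =ᵐ[P] fun _ => (1 : ℝ≥0∞)

/-- A stable outer measure on the conditional power set of `X`. -/
def IsStableOuter (P : @Measure Ω mΩ) (X : Set (Ω → E))
    (μ : CondRaw Ω E → Ω → ℝ≥0∞) : Prop :=
  (∀ S, IsCond P X S → Measurable[mΩ] (μ S)) ∧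
    (∀ S T, IsCond P X S → IsCond P X T → ceq P S T → μ S =ᵐ[P] μ T) ∧
    (∀ (A : Partition mΩ P) (S : ℕ → CondRaw Ω E), (∀ k, IsCond P X (S k)) →
      μ (condConcat P A S) =ᵐ[P] A.concat fun k => μ (S k)) ∧
    (∀ S, IsCond P X S → ∀ B, MeasurableSet[mΩ] B →
      μ (crestrict S B) =ᵐ[P] B.indicator (μ S)) ∧
    (∀ S T, IsCond P X S → IsCond P X T → cle P S T → ∀ᵐ ω ∂P, μ S ω ≤ μ T ω) ∧
    ∀ S : ℕ → CondRaw Ω E, (∀ k, IsCond P X (S k)) →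
      ∀ᵐ ω ∂P, μ (cSupFam P X S) ω ≤ ∑' k, μ (S k) ω

/-- Stable Carathéodory measurability with respect to a stable outer measure. -/
def CaraMeasurable (P : @Measure Ω mΩ) (X : Set (Ω → E))
    (μ : CondRaw Ω E → Ω → ℝ≥0∞) (S : CondRaw Ω E) : Prop :=
  ∀ T, IsCond P X T →
    (fun ω => μ (cInf₂ P X T S) ω + μ (cInf₂ P X T (ccompl P X S)) ω) =ᵐ[P] μ T

/-! ### Stable functions, the stable Borel σ-algebra on `L⁰`, and the integral -/

/-- The stable set `L⁰_m(E)` of all (classes of) measurable functions `Ω → E`. -/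
def l0m (P : @Measure Ω mΩ) (E : Type*) [MeasurableSpace E] : Set (Ω → E) :=
  {x | AEMeasurable x P}

/-- A stable function between stable sets of functions. -/
def StableFun (P : @Measure Ω mΩ) (X : Set (Ω → E)) (Y : Set (Ω → F'))
    (f : (Ω → E) → Ω → F') : Prop :=
  (∀ x ∈ X, f x ∈ Y) ∧ (∀ x ∈ X, ∀ y ∈ X, x =ᵐ[P] y → f x =ᵐ[P] f y) ∧
    ∀ (A : Partition mΩ P) (x : ℕ → Ω → E), (∀ k, x k ∈ X) →
      f (A.concat x) =ᵐ[P] A.concat fun k => f (x k)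

/-- The conditional preimage `f⁻¹(W|A)`. -/
def cPreimage (P : @Measure Ω mΩ) (X : Set (Ω → E)) (f : (Ω → E) → Ω → F')
    (W : CondRaw Ω F') : CondRaw Ω E :=
  ({x ∈ X | memOn P (largestSet P fun C => P (C \ W.2) = 0 ∧ ∃ x ∈ X, memOn P C (f x) W.1)
      (f x) W.1},
    largestSet P fun C => P (C \ W.2) = 0 ∧ ∃ x ∈ X, memOn P C (f x) W.1)

/-- The stable Borel σ-algebra `B(L⁰)` on `L⁰`, generated by the stable open balls. -/
def borelL0 (P : @Measure Ω mΩ) : Set (CondRaw Ω ℝ) :=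
  sigmaGen P (l0m P ℝ)
    {S | ∃ r ε : Ω → ℝ, AEMeasurable r P ∧ AEMeasurable ε P ∧ (∀ᵐ ω ∂P, 0 < ε ω) ∧
      ceq P S ({s | AEMeasurable s P ∧ ∀ᵐ ω ∂P, |s ω - r ω| < ε ω}, univ)}

/-- A stably measurable function `f : X → L⁰` with respect to a stable σ-algebra `𝒳`. -/
def StablyMeasurable (P : @Measure Ω mΩ) (X : Set (Ω → E)) (𝒳 : Set (CondRaw Ω E))
    (f : (Ω → E) → Ω → ℝ) : Prop :=
  StableFun P X (l0m P ℝ) f ∧ ∀ W ∈ borelL0 P, cPreimage P X f W ∈ 𝒳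

/-- The base set `A_x` of the stable indicator function of `S = V|A` at `x`. -/
def indBase (P : @Measure Ω mΩ) (S : CondRaw Ω E) (x : Ω → E) : Set Ω :=
  largestSet P fun C => P (C \ S.2) = 0 ∧ memOn P C x S.1

/-- The stable indicator function `1_{V|A} : X → L⁰`. -/
def cIndicator (P : @Measure Ω mΩ) (S : CondRaw Ω E) (x : Ω → E) : Ω → ℝ :=
  (indBase P S x).indicator fun _ => (1 : ℝ)

/-- Data of a stable elementary function: coefficients and conditional sets. -/
def ElemRep (Ω E : Type*) := Σ n : ℕ, (Fin n → Ω → ℝ) × (Fin n → CondRaw Ω E)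

/-- The function `∑_{k ≤ n} r_k 1_{V_k|A_k}` represented by `ρ`. -/
def repFun (P : @Measure Ω mΩ) (ρ : ElemRep Ω E) : (Ω → E) → Ω → ℝ :=
  fun x ω => ∑ k, ρ.2.1 k ω * cIndicator P (ρ.2.2 k) x ω

/-- The representation `ρ` is admissible: nonnegative `L⁰`-coefficients and a finite
pairwise disjoint family in `𝒳` whose conditional union is `X`. -/
def GoodRep (P : @Measure Ω mΩ) (X : Set (Ω → E)) (𝒳 : Set (CondRaw Ω E))
    (ρ : ElemRep Ω E) : Prop :=
  (∀ k, AEMeasurable (ρ.2.1 k) P) ∧ (∀ k, ∀ᵐ ω ∂P, 0 ≤ ρ.2.1 k ω) ∧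
    (∀ k, ρ.2.2 k ∈ 𝒳) ∧ (∀ i j, i ≠ j → cdisjoint P X (ρ.2.2 i) (ρ.2.2 j)) ∧
    ceq P (cSupFam P X ρ.2.2) (ctop X)

/-- A stable elementary function. -/
def IsElementary (P : @Measure Ω mΩ) (X : Set (Ω → E)) (𝒳 : Set (CondRaw Ω E))
    (f : (Ω → E) → Ω → ℝ) : Prop :=
  ∃ ρ : ElemRep Ω E, GoodRep P X 𝒳 ρ ∧ ∀ x ∈ X, f x =ᵐ[P] repFun P ρ x

/-- The stable Lebesgue integral `∑_k r_k μ(V_k|A_k)` of the elementary representation. -/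
def repInt (μ : CondRaw Ω E → Ω → ℝ≥0∞) (ρ : ElemRep Ω E) : Ω → ℝ≥0∞ :=
  fun ω => ∑ k, ENNReal.ofReal (ρ.2.1 k ω) * μ (ρ.2.2 k) ω

/-- The stable Lebesgue integral of a nonnegative function, as the supremum of the
integrals of the dominated stable elementary functions. -/
def cIntNN (P : @Measure Ω mΩ) (X : Set (Ω → E)) (𝒳 : Set (CondRaw Ω E))
    (μ : CondRaw Ω E → Ω → ℝ≥0∞) (f : (Ω → E) → Ω → ℝ) : Ω → ℝ≥0∞ :=
  fun ω =>
    ⨆ ρ : {ρ : ElemRep Ω E // GoodRep P X 𝒳 ρ ∧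
        ∀ x ∈ X, ∀ᵐ ω' ∂P, repFun P ρ x ω' ≤ f x ω'},
      repInt μ ρ.1 ω

/-- The positive part `f⁺` of an `L⁰`-valued function. -/
def fplus (f : (Ω → E) → Ω → ℝ) : (Ω → E) → Ω → ℝ := fun x ω => max (f x ω) 0

/-- The negative part `f⁻` of an `L⁰`-valued function. -/
def fminus (f : (Ω → E) → Ω → ℝ) : (Ω → E) → Ω → ℝ := fun x ω => max (-(f x ω)) 0

/-- Stable integrability of `f : X → L⁰`. -/
def CIntegrable (P : @Measure Ω mΩ) (X : Set (Ω → E)) (𝒳 : Set (CondRaw Ω E))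
    (μ : CondRaw Ω E → Ω → ℝ≥0∞) (f : (Ω → E) → Ω → ℝ) : Prop :=
  StablyMeasurable P X 𝒳 f ∧ (∀ᵐ ω ∂P, cIntNN P X 𝒳 μ (fplus f) ω < ∞) ∧
    ∀ᵐ ω ∂P, cIntNN P X 𝒳 μ (fminus f) ω < ∞

/-- The stable Lebesgue integral `∫_X f dμ := ∫ f⁺ dμ − ∫ f⁻ dμ`. -/
def cInt (P : @Measure Ω mΩ) (X : Set (Ω → E)) (𝒳 : Set (CondRaw Ω E))
    (μ : CondRaw Ω E → Ω → ℝ≥0∞) (f : (Ω → E) → Ω → ℝ) : Ω → ℝ :=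
  fun ω => (cIntNN P X 𝒳 μ (fplus f) ω).toReal - (cIntNN P X 𝒳 μ (fminus f) ω).toReal

/-! ### Products and sections -/

/-- The pairing `ω ↦ (x ω, y ω)`. -/
def pairFn (x : Ω → E) (y : Ω → F') : Ω → E × F' := fun ω => (x ω, y ω)

/-- The Cartesian product `X × Y` of two stable sets, as a stable set of functions
`Ω → E × F'`. -/
def prodSet (P : @Measure Ω mΩ) (X : Set (Ω → E)) (Y : Set (Ω → F')) :
    Set (Ω → E × F') :=
  {z | ∃ x ∈ X, ∃ y ∈ Y, z =ᵐ[P] pairFn x y}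

/-- The conditional rectangle `V|A × W|B := (V × W)|A ∩ B`. -/
def crect (P : @Measure Ω mΩ) (S : CondRaw Ω E) (T : CondRaw Ω F') :
    CondRaw Ω (E × F') :=
  (prodSet P S.1 T.1, S.2 ∩ T.2)

/-- The stable product σ-algebra `𝒳 ⊗ 𝒴`, generated by the conditional rectangles. -/
def prodSigma (P : @Measure Ω mΩ) (X : Set (Ω → E)) (Y : Set (Ω → F'))
    (𝒳 : Set (CondRaw Ω E)) (𝒴 : Set (CondRaw Ω F')) : Set (CondRaw Ω (E × F')) :=
  sigmaGen P (prodSet P X Y) {R | ∃ S ∈ 𝒳, ∃ T ∈ 𝒴, ceq P R (crect P S T)}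

/-- The conditional `x`-section `(Z|C)_x` of a conditional subset of `X × Y`. -/
def xsection (P : @Measure Ω mΩ) (Y : Set (Ω → F')) (Z : CondRaw Ω (E × F'))
    (x : Ω → E) : CondRaw Ω F' :=
  ({y ∈ Y | memOn P (largestSet P fun D => P (D \ Z.2) = 0 ∧ ∃ y ∈ Y, memOn P D (pairFn x y) Z.1)
      (pairFn x y) Z.1},
    largestSet P fun D => P (D \ Z.2) = 0 ∧ ∃ y ∈ Y, memOn P D (pairFn x y) Z.1)

/-- The conditional `y`-section `(Z|C)_y` of a conditional subset of `X × Y`. -/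
def ysection (P : @Measure Ω mΩ) (X : Set (Ω → E)) (Z : CondRaw Ω (E × F'))
    (y : Ω → F') : CondRaw Ω E :=
  ({x ∈ X | memOn P (largestSet P fun D => P (D \ Z.2) = 0 ∧ ∃ x ∈ X, memOn P D (pairFn x y) Z.1)
      (pairFn x y) Z.1},
    largestSet P fun D => P (D \ Z.2) = 0 ∧ ∃ x ∈ X, memOn P D (pairFn x y) Z.1)

/-! ### Conditional subsets of `L⁰_m(E)` associated to measurable sets -/

/-- `L⁰_m(F) = {x ∈ L⁰_m(E) : x ∈ F a.s.}` for a measurable `F ⊆ E`. -/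
def l0mF (P : @Measure Ω mΩ) {E : Type*} [MeasurableSpace E] (F : Set E) : Set (Ω → E) :=
  {x | AEMeasurable x P ∧ ∀ᵐ ω ∂P, x ω ∈ F}

/-- `∑ L⁰_m(F_k)|A_k = {x ∈ L⁰_m(E) : x ∈ F_k a.s. on A_k for all k}`. -/
def l0mConcat (P : @Measure Ω mΩ) {E : Type*} [MeasurableSpace E]
    (A : Partition mΩ P) (F : ℕ → Set E) : Set (Ω → E) :=
  {x | AEMeasurable x P ∧ ∀ k, ∀ᵐ ω ∂P, ω ∈ A.part k → x ω ∈ F k}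

/-- The stable ring `ℛ` on `L⁰_m(E)` generated by a measurable structure on `E`:
all conditional subsets of the form `(∑ L⁰_m(F_k)|A_k)|B`. -/
def ringR (P : @Measure Ω mΩ) (E : Type*) [MeasurableSpace E] : Set (CondRaw Ω E) :=
  {S | ∃ (F : ℕ → Set E) (A : Partition mΩ P) (B : Set Ω),
    (∀ k, MeasurableSet (F k)) ∧ MeasurableSet[mΩ] B ∧
      ceq P S (l0mConcat P A F, B)}

end CondMT

namespace CondMT

/-!
A conditional set `S = V|A` is encoded by its graph, the set of all `(x, ω)` such that `x` belongs
to `S` at `ω`. Modulo the sets that are `P`-null in every fibre `{x} × Ω` with `x ∈ X`, the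
conditional operations become set operations on graphs. The graphs of the elements of a stable
ring thus form an ordinary ring of sets, on which `∫ μ(S) dP` is a pre-measure. The classical
extension theorem yields a scalar measure `M`, and stability of the ring under concatenation makes
every `{(x, ω) | ω ∈ A}` with `A` measurable an `M`-measurable set. The extension `ν(S)` is then
the Radon–Nikodym density with respect to `P` of the image under `(x, ω) ↦ ω` of the restriction
of `M` to the graph of `S`.
-/

section

variable {Ω E ι : Type*} {mΩ : MeasurableSpace Ω} {P : Measure Ω}

section Gluing

namespace Partition

variable (A : Partition mΩ P)

theorem ae_exists_mem : ∀ᵐ ω ∂P, ∃ k, ω ∈ A.part k := by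
  filter_upwards [measure_eq_zero_iff_ae_notMem.1 A.cover] with ω hω
  simpa using hω

theorem ae_unique : ∀ᵐ ω ∂P, ∀ i j, ω ∈ A.part i → ω ∈ A.part j → i = j := by
  have hdisj : ∀ᵐ ω ∂P, ∀ i j, i ≠ j → ω ∉ A.part i ∩ A.part j := by
    simp only [ae_all_iff]
    exact fun i j hij => measure_eq_zero_iff_ae_notMem.1 (A.disj i j hij)
  filter_upwards [hdisj] with ω hω i j hi hj
  exact not_imp_comm.1 (hω i j) fun h => h ⟨hi, hj⟩

theorem ae_concat_eq (x : ℕ → Ω → E) :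
    ∀ᵐ ω ∂P, ∀ k, ω ∈ A.part k → A.concat x ω = x k ω := by
  classical
  filter_upwards [A.ae_unique] with ω hω k hk
  have hex : ∃ k, ω ∈ A.part k := ⟨k, hk⟩
  rw [concat, dif_pos hex, hω _ k (Nat.find_spec hex) hk]

/-- The partition of `Ω` into the level sets of a measurable index `N : Ω → ℕ`. -/
def ofIndex (P : Measure Ω) (N : Ω → ℕ) (hN : Measurable N) : Partition mΩ P where
  part k := N ⁻¹' {k}
  meas k := hN (measurableSet_singleton k)
  disj i j hij := by
    rw [← preimage_inter, singleton_inter_eq_empty.2 (by simpa using hij), preimage_empty,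
      measure_empty]
  cover := by simp [← preimage_iUnion, iUnion_of_singleton]

theorem concat_ofIndex {N : Ω → ℕ} (hN : Measurable N) (x : ℕ → Ω → E) :
    (ofIndex P N hN).concat x = fun ω => x (N ω) ω := by
  classical
  funext ω
  have hex : ∃ k, ω ∈ (ofIndex P N hN).part k := ⟨N ω, rfl⟩
  have hfind : N ω = Nat.find hex := Nat.find_spec hex
  rw [concat, dif_pos hex, ← hfind]

end Partition

variable {V : Set (Ω → E)}

theorem Stable.select_mem (hV : Stable P V) {N : Ω → ℕ} (hN : Measurable N) {y : ℕ → Ω → E}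
    (hy : ∀ n, y n ∈ V) : (fun ω => y (N ω) ω) ∈ V :=
  Partition.concat_ofIndex (P := P) hN y ▸ hV.2.2 _ y hy

open Classical in
theorem Stable.piecewise_mem (hV : Stable P V) {C : Set Ω} (hC : MeasurableSet C) {x y : Ω → E}
    (hx : x ∈ V) (hy : y ∈ V) : C.piecewise x y ∈ V := by
  have hN : Measurable (C.piecewise (fun _ => 0) fun _ => 1 : Ω → ℕ) :=
    measurable_const.piecewise hC measurable_const
  convert hV.select_mem hN (y := fun n => if n = 0 then x else y)
    fun n => by split_ifs <;> assumption using 2 with ω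
  by_cases hω : ω ∈ C <;> simp [hω]

theorem exists_measurable_index {C : ℕ → Set Ω} (hC : ∀ n, MeasurableSet (C n)) :
    ∃ N : Ω → ℕ, Measurable N ∧ ∀ ω ∈ ⋃ n, C n, ω ∈ C (N ω) := by
  classical
  have hex : ∀ ω, ∃ n, ω ∈ C n ∪ (⋃ n, C n)ᶜ := fun ω => by
    by_cases hω : ω ∈ ⋃ n, C n
    · exact (mem_iUnion.1 hω).imp fun _ => Or.inl
    · exact ⟨0, Or.inr hω⟩
  refine ⟨fun ω => Nat.find (hex ω),
    measurable_find hex fun n => (hC n).union (MeasurableSet.iUnion hC).compl, fun ω hω => ?_⟩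
  exact (Nat.find_spec (hex ω)).resolve_right (not_not.2 hω)

end Gluing

section Exhaustion

variable [SFinite P]

theorem exists_largest_of_iUnion {Φ : Set Ω → Prop} (hempty : Φ ∅)
    (hUnion : ∀ C : ℕ → Set Ω, (∀ n, MeasurableSet (C n)) → (∀ n, Φ (C n)) → Φ (⋃ n, C n)) :
    ∃ C, MeasurableSet C ∧ Φ C ∧ ∀ C', MeasurableSet C' → Φ C' → C' ≤ᵐ[P] C := by
  set Q := P.toFinite
  set T : Set ℝ≥0∞ := {r | ∃ C, MeasurableSet C ∧ Φ C ∧ Q C = r}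
  obtain ⟨u, -, hu, huT⟩ :=
    exists_seq_tendsto_sSup (S := T) ⟨_, ∅, .empty, hempty, rfl⟩ (OrderTop.bddAbove T)
  choose C hCm hCΦ hCu using huT
  have hUm := MeasurableSet.iUnion hCm
  refine ⟨⋃ n, C n, hUm, hUnion C hCm hCΦ, fun C' hC' hΦ' => ?_⟩
  have hT_le : sSup T ≤ Q (⋃ n, C n) :=
    le_of_tendsto' hu fun n => hCu n ▸ measure_mono (subset_iUnion C n)
  have hΦ : Φ (C' ∪ ⋃ n, C n) := by
    have := hUnion (fun n => n.casesOn C' C) (Nat.rec hC' fun n _ => hCm n)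
      (Nat.rec hΦ' fun n _ => hCΦ n)
    rwa [← union_iUnion_nat_succ] at this
  have hQ_le : Q (C' ∪ ⋃ n, C n) ≤ Q (⋃ n, C n) :=
    (le_sSup (show _ ∈ T from ⟨_, hC'.union hUm, hΦ, rfl⟩)).trans hT_le
  have hae : (⋃ n, C n : Set Ω) =ᵐ[Q] (C' ∪ ⋃ n, C n : Set Ω) :=
    ae_eq_of_subset_of_measure_ge subset_union_right hQ_le hUm.nullMeasurableSet
      (measure_ne_top Q _)
  rw [← ae_toFinite]
  exact subset_union_left.eventuallyLE.trans hae.symm.le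

end Exhaustion

section IndBase

theorem Stable.memOn_iUnion {V : Set (Ω → E)} (hV : Stable P V) {x : Ω → E} {C : ℕ → Set Ω}
    (hC : ∀ n, MeasurableSet (C n)) (h : ∀ n, memOn P (C n) x V) : memOn P (⋃ n, C n) x V := by
  choose y hy hxy using h
  obtain ⟨N, hN, hmem⟩ := exists_measurable_index hC
  refine ⟨_, hV.select_mem hN hy, ?_⟩
  filter_upwards [ae_all_iff.2 hxy] with ω h hω
  exact h _ (hmem ω hω)

namespace IsCond

variable [SFinite P] {X : Set (Ω → E)} {S : CondRaw Ω E} {x y : Ω → E} {C : Set Ω}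

theorem indBase_spec (hS : IsCond P X S) (x : Ω → E) :
    MeasurableSet (indBase P S x) ∧
      (P (indBase P S x \ S.2) = 0 ∧ memOn P (indBase P S x) x S.1) ∧
      ∀ C, MeasurableSet C → (P (C \ S.2) = 0 ∧ memOn P C x S.1) → P (C \ indBase P S x) = 0 := by
  have hex : ∃ C, MeasurableSet[mΩ] C ∧ (P (C \ S.2) = 0 ∧ memOn P C x S.1) ∧
      ∀ C', MeasurableSet[mΩ] C' → (P (C' \ S.2) = 0 ∧ memOn P C' x S.1) → P (C' \ C) = 0 := by
    obtain ⟨C, hC, hΦ, hmax⟩ := exists_largest_of_iUnion (P := P)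
      (Φ := fun C => P (C \ S.2) = 0 ∧ memOn P C x S.1)
      ⟨by simp, hS.1.1.imp fun _ hy => ⟨hy, .of_forall fun _ h => h.elim⟩⟩
      fun C hC hΦ => ⟨by simpa only [iUnion_sdiff, measure_iUnion_null_iff] using fun n => (hΦ n).1,
        hS.1.memOn_iUnion hC fun n => (hΦ n).2⟩
    exact ⟨C, hC, hΦ, fun C' hC' hΦ' => ae_le_set.1 (hmax C' hC' hΦ')⟩
  rw [indBase, largestSet, dif_pos hex]
  exact hex.choose_spec

theorem measurableSet_indBase (hS : IsCond P X S) (x : Ω → E) : MeasurableSet (indBase P S x) :=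
  (hS.indBase_spec x).1

theorem indBase_le_base (hS : IsCond P X S) (x : Ω → E) : indBase P S x ≤ᵐ[P] S.2 :=
  ae_le_set.2 (hS.indBase_spec x).2.1.1

theorem memOn_indBase (hS : IsCond P X S) (x : Ω → E) : memOn P (indBase P S x) x S.1 :=
  (hS.indBase_spec x).2.1.2

theorem le_indBase (hS : IsCond P X S) (hC : MeasurableSet C) (hCS : C ≤ᵐ[P] S.2)
    (hx : memOn P C x S.1) : C ≤ᵐ[P] indBase P S x :=
  ae_le_set.2 ((hS.indBase_spec x).2.2 C hC ⟨ae_le_set.1 hCS, hx⟩)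

theorem base_le_indBase (hS : IsCond P X S) (hx : x ∈ S.1) : S.2 ≤ᵐ[P] indBase P S x :=
  hS.le_indBase hS.2.2 .rfl ⟨x, hx, .of_forall fun _ _ => rfl⟩

theorem mem_indBase_of_ae_eqOn (hS : IsCond P X S) (hC : MeasurableSet C)
    (hxy : ∀ᵐ ω ∂P, ω ∈ C → x ω = y ω) :
    ∀ᵐ ω ∂P, ω ∈ C → ω ∈ indBase P S x → ω ∈ indBase P S y := by
  obtain ⟨z, hz, hxz⟩ := hS.memOn_indBase x
  have hle : (C ∩ indBase P S x : Set Ω) ≤ᵐ[P] indBase P S y := by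
    refine hS.le_indBase (hC.inter (hS.measurableSet_indBase x))
      (inter_subset_right.eventuallyLE.trans (hS.indBase_le_base x)) ⟨z, hz, ?_⟩
    filter_upwards [hxz, hxy] with ω hωz hωy hω
    rw [← hωy hω.1, hωz hω.2]
  filter_upwards [hle] with ω h hC hx using h ⟨hC, hx⟩

end IsCond

end IndBase

section FiberAE

/-- The filter on `(Ω → E) × Ω` whose large sets are those whose section at every `x ∈ X` is
`P`-conull. Conditional subsets of `X` are identified exactly when their graphs agree along it. -/
def fiberAE (P : Measure Ω) (X : Set (Ω → E)) : Filter ((Ω → E) × Ω) :=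
  ⨆ x ∈ X, (ae P).map (Prod.mk x)

variable {X : Set (Ω → E)}

theorem eventually_fiberAE {q : (Ω → E) × Ω → Prop} :
    (∀ᶠ p in fiberAE P X, q p) ↔ ∀ x ∈ X, ∀ᵐ ω ∂P, q (x, ω) := by
  simp only [fiberAE, eventually_iSup, eventually_map]

instance : CountableInterFilter (fiberAE P X) where
  countable_sInter_mem 𝒢 h𝒢 hmem := by
    have := (eventually_fiberAE (P := P) (X := X) (q := (· ∈ ⋂₀ 𝒢))).2 fun x hx => by
      simp only [mem_sInter, eventually_countable_ball h𝒢]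
      exact fun G hG => eventually_fiberAE.1 (hmem G hG) x hx
    exact this

theorem eventually_fiberAE_snd {q : Ω → Prop} (hq : ∀ᵐ ω ∂P, q ω) :
    ∀ᶠ p in fiberAE P X, q p.2 :=
  eventually_fiberAE.2 fun _ _ => hq

/-- The graph of a conditional set `S`: the pairs `(x, ω)` such that `x` belongs to `S` at `ω`. -/
def graph (P : Measure Ω) (S : CondRaw Ω E) : Set ((Ω → E) × Ω) :=
  {p | p.2 ∈ indBase P S p.1}

variable [SFinite P] {S T : CondRaw Ω E}

theorem cle_iff_graph_le (hS : IsCond P X S) (hT : IsCond P X T) :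
    cle P S T ↔ graph P S ≤ᶠ[fiberAE P X] graph P T := by
  refine Iff.trans ?_ eventually_fiberAE.symm
  constructor
  · rintro ⟨hbase, hmem⟩ x -
    obtain ⟨y, hy, hxy⟩ := hS.memOn_indBase x
    obtain ⟨z, hz, hyz⟩ := hmem y hy
    refine hT.le_indBase (hS.measurableSet_indBase x)
      ((hS.indBase_le_base x).trans (ae_le_set.2 hbase)) ⟨z, hz, ?_⟩
    filter_upwards [hxy, hyz, hS.indBase_le_base x] with ω hωy hωz hle hω
    rw [hωy hω, hωz (hle hω)]
  · intro hle
    have hbase : ∀ x ∈ S.1, S.2 ≤ᵐ[P] indBase P T x := fun x hx =>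
      (hS.base_le_indBase hx).trans (hle x (hS.2.1 hx))
    obtain ⟨x₀, hx₀⟩ := hS.1.1
    refine ⟨ae_le_set.1 ((hbase x₀ hx₀).trans (hT.indBase_le_base x₀)), fun x hx => ?_⟩
    obtain ⟨y, hy, hxy⟩ := hT.memOn_indBase x
    refine ⟨y, hy, ?_⟩
    filter_upwards [hbase x hx, hxy] with ω hωT hωy hω using hωy (hωT hω)

theorem ceq_iff_graph_eq (hS : IsCond P X S) (hT : IsCond P X T) :
    ceq P S T ↔ graph P S =ᶠ[fiberAE P X] graph P T :=
  (and_congr (cle_iff_graph_le hS hT) (cle_iff_graph_le hT hS)).trans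
    eventuallyLE_antisymm_iff.symm

end FiberAE

section Realization

variable {X : Set (Ω → E)} {G H : Set ((Ω → E) × Ω)}

/-- Extensional sets `G`: membership of `(x, ω)` depends only on the values of `x` near `ω`, up to
null sets. These are the sets that arise as graphs of conditional subsets of `X`. -/
structure IsExtensional (P : Measure Ω) (X : Set (Ω → E)) (G : Set ((Ω → E) × Ω)) : Prop where
  measurableSet_section : ∀ x ∈ X, MeasurableSet (Prod.mk x ⁻¹' G)
  mem_of_ae_eqOn : ∀ x ∈ X, ∀ y ∈ X, ∀ C, MeasurableSet C → (∀ᵐ ω ∂P, ω ∈ C → x ω = y ω) →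
    ∀ᵐ ω ∂P, ω ∈ C → (x, ω) ∈ G → (y, ω) ∈ G

theorem IsCond.isExtensional_graph [SFinite P] {S : CondRaw Ω E} (hS : IsCond P X S) :
    IsExtensional P X (graph P S) where
  measurableSet_section x _ := hS.measurableSet_indBase x
  mem_of_ae_eqOn _ _ _ _ _ hC hxy := hS.mem_indBase_of_ae_eqOn hC hxy

namespace IsExtensional

theorem inter (hG : IsExtensional P X G) (hH : IsExtensional P X H) :
    IsExtensional P X (G ∩ H) where
  measurableSet_section x hx :=
    (hG.measurableSet_section x hx).inter (hH.measurableSet_section x hx)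
  mem_of_ae_eqOn x hx y hy C hC hxy := by
    filter_upwards [hG.mem_of_ae_eqOn x hx y hy C hC hxy, hH.mem_of_ae_eqOn x hx y hy C hC hxy]
      with ω hG hH hω h using ⟨hG hω h.1, hH hω h.2⟩

theorem iUnion [Countable ι] {G : ι → Set ((Ω → E) × Ω)} (hG : ∀ i, IsExtensional P X (G i)) :
    IsExtensional P X (⋃ i, G i) where
  measurableSet_section x hx := by
    rw [preimage_iUnion]
    exact .iUnion fun i => (hG i).measurableSet_section x hx
  mem_of_ae_eqOn x hx y hy C hC hxy := by
    filter_upwards [ae_all_iff.2 fun i => (hG i).mem_of_ae_eqOn x hx y hy C hC hxy] with ω hω hωC h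
    exact mem_iUnion.2 ((mem_iUnion.1 h).imp fun i => hω i hωC)

theorem compl (hG : IsExtensional P X G) : IsExtensional P X Gᶜ where
  measurableSet_section x hx := (hG.measurableSet_section x hx).compl
  mem_of_ae_eqOn x hx y hy C hC hxy := by
    filter_upwards [hG.mem_of_ae_eqOn y hy x hx C hC (hxy.mono fun ω h hω => (h hω).symm)]
      with ω h hω hx hy using hx (h hω hy)

end IsExtensional

/-- The elements of `X` whose graph over `A` is contained in `G`. -/
def selections (P : Measure Ω) (X : Set (Ω → E)) (G : Set ((Ω → E) × Ω)) (A : Set Ω) :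
    Set (Ω → E) :=
  {x ∈ X | A ≤ᵐ[P] Prod.mk x ⁻¹' G}

namespace IsExtensional

theorem stable_selections (hG : IsExtensional P X G) (hX : Stable P X) {A : Set Ω}
    (hne : (selections P X G A).Nonempty) : Stable P (selections P X G A) := by
  refine ⟨hne, fun x hx y hxy => ?_, fun B x hx => ?_⟩
  · have hy := hX.2.1 x hx.1 y hxy
    refine ⟨hy, ?_⟩
    filter_upwards [hx.2, hG.mem_of_ae_eqOn x hx.1 y hy univ .univ (hxy.mono fun ω h _ => h)]
      with ω hAx hxy hA using hxy (mem_univ ω) (hAx hA)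
  · have hz := hX.2.2 B x fun k => (hx k).1
    have htransfer : ∀ k, ∀ᵐ ω ∂P, ω ∈ B.part k → (x k, ω) ∈ G → (B.concat x, ω) ∈ G := fun k =>
      hG.mem_of_ae_eqOn _ (hx k).1 _ hz _ (B.meas k)
        ((B.ae_concat_eq x).mono fun ω h hk => (h k hk).symm)
    refine ⟨hz, ?_⟩
    filter_upwards [ae_all_iff.2 htransfer, ae_all_iff.2 fun k => (hx k).2, B.ae_exists_mem]
      with ω htr hAx hex hA
    obtain ⟨k, hk⟩ := hex
    exact htr k hk (hAx k hA)

theorem selections_iUnion_nonempty (hG : IsExtensional P X G) (hX : Stable P X) {C : ℕ → Set Ω}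
    (hC : ∀ n, MeasurableSet (C n)) (hne : ∀ n, (selections P X G (C n)).Nonempty) :
    (selections P X G (⋃ n, C n)).Nonempty := by
  choose y hy using hne
  obtain ⟨N, hN, hmem⟩ := exists_measurable_index hC
  have hz := hX.select_mem hN fun n => (hy n).1
  have htransfer : ∀ n, ∀ᵐ ω ∂P, N ω = n → (y n, ω) ∈ G → (fun ω => y (N ω) ω, ω) ∈ G := fun n =>
    hG.mem_of_ae_eqOn _ (hy n).1 _ hz _ (hN (measurableSet_singleton n))
      (.of_forall fun ω (hω : N ω = n) => by rw [hω])
  refine ⟨_, hz, ?_⟩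
  filter_upwards [ae_all_iff.2 htransfer, ae_all_iff.2 fun n => (hy n).2] with ω htr hle hω
  exact htr _ rfl (hle _ (hmem ω hω))

theorem exists_mem_selections_eqOn (hG : IsExtensional P X G) (hX : Stable P X) {A : Set Ω}
    (hne : (selections P X G A).Nonempty) {x : Ω → E} (hx : x ∈ X) :
    memOn P (Prod.mk x ⁻¹' G) x (selections P X G A) := by
  classical
  obtain ⟨y, hy, hAy⟩ := hne
  have hGx := hG.measurableSet_section x hx
  have hz := hX.piecewise_mem hGx hx hy
  refine ⟨_, ⟨hz, ?_⟩, .of_forall fun ω hω => (piecewise_eq_of_mem _ x y hω).symm⟩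
  filter_upwards [hAy,
    hG.mem_of_ae_eqOn x hx _ hz _ hGx (.of_forall fun ω hω => (piecewise_eq_of_mem _ x y hω).symm),
    hG.mem_of_ae_eqOn y hy _ hz _ hGx.compl
      (.of_forall fun ω hω => (piecewise_eq_of_notMem _ x y hω).symm)] with ω hAy hx hy hA
  by_cases hω : (x, ω) ∈ G
  · exact hx hω hω
  · exact hy hω (hAy hA)

theorem exists_graph_eq [SFinite P] (hG : IsExtensional P X G) (hX : Stable P X) :
    ∃ S, IsCond P X S ∧ graph P S =ᶠ[fiberAE P X] G := by
  obtain ⟨x₀, hx₀⟩ := hX.1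
  obtain ⟨A, hA, hne, hmax⟩ := exists_largest_of_iUnion (P := P)
    (Φ := fun A => (selections P X G A).Nonempty)
    ⟨x₀, hx₀, .of_forall fun _ h => h.elim⟩ fun _ => hG.selections_iUnion_nonempty hX
  have hS : IsCond P X (selections P X G A, A) :=
    ⟨hG.stable_selections hX hne, fun x hx => hx.1, hA⟩
  refine ⟨_, hS, eventually_fiberAE.2 fun x hx => ?_⟩
  have hGx := hG.measurableSet_section x hx
  have hle : indBase P (selections P X G A, A) x ≤ᵐ[P] Prod.mk x ⁻¹' G := by
    obtain ⟨y, hy, hxy⟩ := hS.memOn_indBase x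
    filter_upwards [hS.indBase_le_base x, hy.2, hG.mem_of_ae_eqOn y hy.1 x hx _
      (hS.measurableSet_indBase x) (hxy.mono fun ω h hω => (h hω).symm)] with ω hbase hAy hyx hω
    exact hyx hω (hAy (hbase hω))
  have hge : Prod.mk x ⁻¹' G ≤ᵐ[P] indBase P (selections P X G A, A) x :=
    hS.le_indBase hGx (hmax _ hGx ⟨x, hx, .rfl⟩) (hG.exists_mem_selections_eqOn hX hne hx)
  exact hle.antisymm hge

end IsExtensional

end Realization

section HasGraph

variable {X : Set (Ω → E)} {S T : CondRaw Ω E} {G H : Set ((Ω → E) × Ω)}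

/-- `S` is a conditional subset of `X` with graph `G`. Only the class of `G` modulo `fiberAE P X`
matters, so `G` may be chosen freely among its versions. -/
structure HasGraph (P : Measure Ω) (X : Set (Ω → E)) (S : CondRaw Ω E)
    (G : Set ((Ω → E) × Ω)) : Prop where
  isCond : IsCond P X S
  graph_eq : graph P S =ᶠ[fiberAE P X] G

theorem IsCond.hasGraph (hS : IsCond P X S) : HasGraph P X S (graph P S) := ⟨hS, .rfl⟩

theorem HasGraph.congr (hS : HasGraph P X S G) (hGH : G =ᶠ[fiberAE P X] H) : HasGraph P X S H :=
  ⟨hS.isCond, hS.graph_eq.trans hGH⟩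

section Concatenation

theorem mem_concatSet_iff {A : Partition mΩ P} {V : ℕ → Set (Ω → E)} {f : Ω → E} :
    f ∈ concatSet P A V ↔ ∀ k, memOn P (A.part k) f (V k) := by
  constructor
  · rintro ⟨x, hx, hfx⟩ k
    refine ⟨x k, hx k, ?_⟩
    filter_upwards [hfx, A.ae_concat_eq x] with ω hω hA hk
    rw [hω, hA k hk]
  · intro h
    choose x hx hfx using h
    refine ⟨x, hx, ?_⟩
    filter_upwards [ae_all_iff.2 hfx, A.ae_concat_eq x, A.ae_exists_mem] with ω hω hA ⟨k, hk⟩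
    rw [hω k hk, hA k hk]

theorem stable_concatSet (A : Partition mΩ P) {V : ℕ → Set (Ω → E)} (hV : ∀ k, Stable P (V k)) :
    Stable P (concatSet P A V) := by
  refine ⟨?_, fun f ⟨x, hx, hfx⟩ g hfg => ⟨x, hx, hfg.symm.trans hfx⟩, fun B f hf => ?_⟩
  · choose x hx using fun k => (hV k).1
    exact ⟨A.concat x, x, hx, .rfl⟩
  · refine mem_concatSet_iff.2 fun k => ?_
    choose y hy hfy using fun n => mem_concatSet_iff.1 (hf n) k
    refine ⟨B.concat y, (hV k).2.2 B y hy, ?_⟩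
    filter_upwards [ae_all_iff.2 hfy, B.ae_concat_eq f, B.ae_concat_eq y, B.ae_exists_mem]
      with ω hfy hf hy ⟨n, hn⟩ hk
    rw [hf n hn, hy n hn, hfy n hk]

theorem isCond_condConcat (hX : Stable P X) (A : Partition mΩ P) {S : ℕ → CondRaw Ω E}
    (hS : ∀ k, IsCond P X (S k)) : IsCond P X (condConcat P A S) := by
  refine ⟨stable_concatSet A fun k => (hS k).1, ?_,
    .iUnion fun k => (A.meas k).inter (hS k).2.2⟩
  rintro f ⟨x, hx, hfx⟩
  exact hX.2.1 _ (hX.2.2 A x fun k => (hS k).2.1 (hx k)) f hfx.symm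

theorem indBase_condConcat [SFinite P] (hX : Stable P X) (A : Partition mΩ P)
    {S : ℕ → CondRaw Ω E} (hS : ∀ k, IsCond P X (S k)) (x : Ω → E) :
    indBase P (condConcat P A S) x =ᵐ[P] ⋃ k, A.part k ∩ indBase P (S k) x := by
  have hA := isCond_condConcat hX A hS
  have hmeas := fun k => (A.meas k).inter ((hS k).measurableSet_indBase x)
  refine EventuallyLE.antisymm ?_ (hA.le_indBase (.iUnion hmeas) ?_ ?_)
  · have hpart : ∀ k, (A.part k ∩ indBase P (condConcat P A S) x : Set Ω)
        ≤ᵐ[P] indBase P (S k) x := fun k => by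
      refine (hS k).le_indBase ((A.meas k).inter (hA.measurableSet_indBase x)) ?_ ?_
      · filter_upwards [hA.indBase_le_base x, A.ae_unique] with ω hbase huniq hω
        obtain ⟨j, hj, hbj⟩ := mem_iUnion.1 (hbase hω.2)
        rwa [huniq k j hω.1 hj]
      · obtain ⟨y, hy, hxy⟩ := hA.memOn_indBase x
        obtain ⟨z, hz, hyz⟩ := mem_concatSet_iff.1 hy k
        refine ⟨z, hz, ?_⟩
        filter_upwards [hxy, hyz] with ω hxy hyz hω
        rw [hxy hω.2, hyz hω.1]
    filter_upwards [ae_all_iff.2 hpart, A.ae_exists_mem] with ω hpart ⟨k, hk⟩ hω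
    exact mem_iUnion.2 ⟨k, hk, hpart k ⟨hk, hω⟩⟩
  · exact .countable_iUnion fun k => .inter .rfl ((hS k).indBase_le_base x)
  · choose y hy hxy using fun k => (hS k).memOn_indBase x
    refine ⟨A.concat y, ⟨y, hy, .rfl⟩, ?_⟩
    filter_upwards [ae_all_iff.2 hxy, A.ae_concat_eq y] with ω hxy hA hω
    obtain ⟨k, hk, hωk⟩ := mem_iUnion.1 hω
    rw [hxy k hωk, hA k hk]

end Concatenation

variable [SFinite P]

theorem hasGraph_cbot (hX : Stable P X) : HasGraph P X (cbot X) ∅ := by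
  have hbot : IsCond P X (cbot X) := ⟨hX, subset_rfl, .empty⟩
  refine ⟨hbot, eventually_fiberAE.2 fun x _ => ?_⟩
  exact (hbot.indBase_le_base x).antisymm (.of_forall fun _ h => h.elim)

theorem hasGraph_ctop (hX : Stable P X) : HasGraph P X (ctop X) univ := by
  have htop : IsCond P X (ctop X) := ⟨hX, subset_rfl, .univ⟩
  refine ⟨htop, eventually_fiberAE.2 fun x hx => ?_⟩
  exact EventuallyLE.antisymm (.of_forall fun _ _ => trivial) (htop.base_le_indBase hx)

theorem hasGraph_cSup (hX : Stable P X) (hG : IsExtensional P X G) {s : Set (CondRaw Ω E)}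
    (hs : ∀ c, IsCond P X c → ((∀ b ∈ s, cle P b c) ↔ G ≤ᶠ[fiberAE P X] graph P c)) :
    HasGraph P X (cSup P X s) G := by
  obtain ⟨a, ha, haG⟩ := hG.exists_graph_eq hX
  have ha_sup : IsSupOf P X s a := ⟨ha, (hs a ha).2 haG.symm.le, fun c hc hc' =>
    (cle_iff_graph_le ha hc).2 (haG.le.trans ((hs c hc).1 hc'))⟩
  have hsup : IsSupOf P X s (cSup P X s) := by
    have hex : ∃ a, IsSupOf P X s a := ⟨a, ha_sup⟩
    rw [cSup, dif_pos hex]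
    exact hex.choose_spec
  have hceq : ceq P (cSup P X s) a :=
    ⟨hsup.2.2 a ha ha_sup.2.1, ha_sup.2.2 _ hsup.1 hsup.2.1⟩
  exact ⟨hsup.1, ((ceq_iff_graph_eq hsup.1 ha).1 hceq).trans haG⟩

theorem hasGraph_cInf (hX : Stable P X) (hG : IsExtensional P X G) {s : Set (CondRaw Ω E)}
    (hs : ∀ c, IsCond P X c → ((∀ b ∈ s, cle P c b) ↔ graph P c ≤ᶠ[fiberAE P X] G)) :
    HasGraph P X (cInf P X s) G := by
  obtain ⟨a, ha, haG⟩ := hG.exists_graph_eq hX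
  have ha_inf : IsInfOf P X s a := ⟨ha, (hs a ha).2 haG.le, fun c hc hc' =>
    (cle_iff_graph_le hc ha).2 (((hs c hc).1 hc').trans haG.symm.le)⟩
  have hinf : IsInfOf P X s (cInf P X s) := by
    have hex : ∃ a, IsInfOf P X s a := ⟨a, ha_inf⟩
    rw [cInf, dif_pos hex]
    exact hex.choose_spec
  have hceq : ceq P (cInf P X s) a :=
    ⟨ha_inf.2.2 _ hinf.1 hinf.2.1, hinf.2.2 a ha ha_inf.2.1⟩
  exact ⟨hinf.1, ((ceq_iff_graph_eq hinf.1 ha).1 hceq).trans haG⟩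

namespace HasGraph

theorem ceq_iff (hS : HasGraph P X S G) (hT : HasGraph P X T H) :
    ceq P S T ↔ G =ᶠ[fiberAE P X] H :=
  (ceq_iff_graph_eq hS.isCond hT.isCond).trans
    ⟨fun h => hS.graph_eq.symm.trans (h.trans hT.graph_eq),
      fun h => hS.graph_eq.trans (h.trans hT.graph_eq.symm)⟩

theorem cSupFam (hX : Stable P X) [Countable ι] {S : ι → CondRaw Ω E}
    {G : ι → Set ((Ω → E) × Ω)} (hS : ∀ i, HasGraph P X (S i) (G i)) :
    HasGraph P X (cSupFam P X S) (⋃ i, G i) := by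
  refine HasGraph.congr (G := ⋃ i, graph P (S i)) ?_
    (.countable_iUnion fun i => (hS i).graph_eq)
  refine hasGraph_cSup hX (.iUnion fun i => (hS i).isCond.isExtensional_graph) fun c hc => ?_
  rw [forall_mem_range]
  refine (forall_congr' fun i => cle_iff_graph_le (hS i).isCond hc).trans
    ⟨fun h => ?_, fun h i => ?_⟩
  · filter_upwards [eventually_countable_forall.2 h] with p hp hmem
    exact (mem_iUnion.1 hmem).elim hp
  · exact (subset_iUnion (fun i => graph P (S i)) i).eventuallyLE.trans h

theorem cSup₂ (hX : Stable P X) (hS : HasGraph P X S G) (hT : HasGraph P X T H) :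
    HasGraph P X (cSup₂ P X S T) (G ∪ H) := by
  have hsup := cSupFam hX (ι := Bool) (S := (cond · S T)) (G := (cond · G H)) (Bool.rec hT hS)
  rwa [CondMT.cSupFam, Bool.range_eq, pair_comm, ← union_eq_iUnion] at hsup

theorem cInf₂ (hX : Stable P X) (hS : HasGraph P X S G) (hT : HasGraph P X T H) :
    HasGraph P X (cInf₂ P X S T) (G ∩ H) := by
  refine HasGraph.congr (hasGraph_cInf hX
    (hS.isCond.isExtensional_graph.inter hT.isCond.isExtensional_graph) fun c hc => ?_)
    (hS.graph_eq.inter hT.graph_eq)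
  simp only [mem_insert_iff, mem_singleton_iff, forall_eq_or_imp, forall_eq,
    cle_iff_graph_le hc hS.isCond, cle_iff_graph_le hc hT.isCond]
  exact eventually_and.symm.trans (eventually_congr (.of_forall fun p => le_inf_iff.symm))

theorem cdisjoint_iff (hX : Stable P X) (hS : HasGraph P X S G) (hT : HasGraph P X T H) :
    cdisjoint P X S T ↔ (G ∩ H : Set _) =ᶠ[fiberAE P X] (∅ : Set _) :=
  (hS.cInf₂ hX hT).ceq_iff (hasGraph_cbot hX)

theorem ccompl (hX : Stable P X) (hS : HasGraph P X S G) : HasGraph P X (ccompl P X S) Gᶜ := by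
  have hext := hS.isCond.isExtensional_graph.compl
  refine HasGraph.congr (hasGraph_cSup hX hext fun c hc => ⟨fun h => ?_, fun h b hb => ?_⟩)
    hS.graph_eq.compl
  · obtain ⟨b, hb, hbG⟩ := hext.exists_graph_eq hX
    refine hbG.symm.le.trans ((cle_iff_graph_le hb hc).1 (h b ⟨hb, ?_⟩))
    exact (HasGraph.cdisjoint_iff hX ⟨hb, hbG⟩ hS.isCond.hasGraph).2
      (compl_inter_self (graph P S)).eventuallyEq
  · have hdisj := (hb.1.hasGraph.cdisjoint_iff hX hS.isCond.hasGraph).1 hb.2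
    refine (cle_iff_graph_le hb.1 hc).2 (EventuallyLE.trans ?_ h)
    filter_upwards [hdisj.le] with p hp hpb hpS using hp ⟨hpb, hpS⟩

theorem condConcat (hX : Stable P X) (A : Partition mΩ P) {S : ℕ → CondRaw Ω E}
    {G : ℕ → Set ((Ω → E) × Ω)} (hS : ∀ k, HasGraph P X (S k) (G k)) :
    HasGraph P X (condConcat P A S) (⋃ k, Prod.snd ⁻¹' A.part k ∩ G k) := by
  have hSc := fun k => (hS k).isCond
  refine HasGraph.congr (G := ⋃ k, Prod.snd ⁻¹' A.part k ∩ graph P (S k))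
    ⟨isCond_condConcat hX A hSc, eventuallyEq_set.2 (eventually_fiberAE.2 fun x _ => ?_)⟩
    (.countable_iUnion fun k => .inter .rfl (hS k).graph_eq)
  filter_upwards [(indBase_condConcat hX A hSc x).mem_iff] with ω hω
  simpa [graph] using hω

end HasGraph

end HasGraph

theorem union_eq_add_of_iUnion_eq_tsum {α : Type*} {C : Set (Set α)} {m : Set α → ℝ≥0∞}
    (hempty : ∅ ∈ C) (m_empty : m ∅ = 0)
    (m_iUnion : ∀ f : ℕ → Set α, (∀ n, f n ∈ C) → (⋃ n, f n) ∈ C →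
      Pairwise (Function.onFun Disjoint f) → m (⋃ n, f n) = ∑' n, m (f n))
    {s t : Set α} (hs : s ∈ C) (ht : t ∈ C) (hst : s ∪ t ∈ C) (hd : Disjoint s t) :
    m (s ∪ t) = m s + m t := by
  set f : Bool → Set α := fun b => cond b s t
  have hf : ∀ b, f b ∈ C := Bool.rec ht hs
  have hdisj : Pairwise (Function.onFun Disjoint f) := pairwise_disjoint_on_bool.2 hd
  have hU : s ∪ t = ⋃ n, ⋃ b ∈ Encodable.decode₂ Bool n, f b := by
    rw [Encodable.iUnion_decode₂, union_eq_iUnion]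
  rw [hU, m_iUnion _ (fun n => Encodable.iUnion_decode₂_cases (C := (· ∈ C)) hempty hf) (hU ▸ hst)
    (Encodable.iUnion_decode₂_disjoint_on hdisj), tsum_iUnion_decode₂ m m_empty, tsum_bool]
  exact add_comm _ _

theorem isCaratheodory_inducedOuterMeasure_of_inter_mem {α : Type*} {C : Set (Set α)}
    (hC : IsSetRing C) (m : AddContent ℝ≥0∞ C) {A : Set α} (hA : ∀ t ∈ C, t ∩ A ∈ C) :
    (inducedOuterMeasure (fun t _ => m t) hC.empty_mem addContent_empty).IsCaratheodory A := by
  refine OuterMeasure.ofFunction_caratheodory fun t => ?_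
  by_cases ht : t ∈ C
  · have hdiff : t \ A ∈ C := sdiff_self_inter ▸ hC.sdiff_mem ht (hA t ht)
    rw [extend_eq (P := (· ∈ C)) _ (hA t ht), extend_eq (P := (· ∈ C)) _ hdiff,
      extend_eq (P := (· ∈ C)) _ ht,
      ← addContent_union hC (hA t ht) hdiff disjoint_sdiff_inter.symm, inter_union_sdiff]
  · exact le_top.trans_eq (iInf_neg ht).symm

theorem exists_measure_eq_of_iUnion_eq_tsum {α : Type*} {C : Set (Set α)} (hC : IsSetRing C)
    {m : Set α → ℝ≥0∞} (m_empty : m ∅ = 0)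
    (m_iUnion : ∀ f : ℕ → Set α, (∀ n, f n ∈ C) → (⋃ n, f n) ∈ C →
      Pairwise (Function.onFun Disjoint f) → m (⋃ n, f n) = ∑' n, m (f n)) :
    ∃ (mC : MeasurableSpace α) (M : Measure α), (∀ s ∈ C, MeasurableSet s ∧ M s = m s) ∧
      ∀ A, (∀ t ∈ C, t ∩ A ∈ C) → MeasurableSet A := by
  let content : AddContent ℝ≥0∞ C := hC.addContent_of_union m m_empty fun hs ht =>
    union_eq_add_of_iUnion_eq_tsum hC.empty_mem m_empty m_iUnion hs ht (hC.union_mem hs ht)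
  have hsub : content.IsSigmaSubadditive :=
    isSigmaSubadditive_of_addContent_iUnion_eq_tsum hC m_iUnion
  refine ⟨_, content.measureCaratheodory hC.isSetSemiring hsub, fun s hs => ⟨?_, ?_⟩,
    fun A hA => isCaratheodory_inducedOuterMeasure_of_inter_mem hC content hA⟩
  · exact content.isCaratheodory_inducedOuterMeasure_of_mem hC.isSetSemiring hs
  · exact content.measureCaratheodory_eq hC.isSetSemiring hsub hs

section GraphContent

variable {X : Set (Ω → E)} {𝒳 : Set (CondRaw Ω E)} {μ : CondRaw Ω E → Ω → ℝ≥0∞}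
  {S : CondRaw Ω E} {G H : Set ((Ω → E) × Ω)}

/-- The sets of pairs that are graphs, modulo `fiberAE P X`, of elements of the collection `𝒳`. -/
def graphs (P : Measure Ω) (X : Set (Ω → E)) (𝒳 : Set (CondRaw Ω E)) :
    Set (Set ((Ω → E) × Ω)) :=
  {G | ∃ S ∈ 𝒳, HasGraph P X S G}

/-- The scalar set function `∫ μ(V|A) dP` of a stable set function `μ`, read on graphs. The infimum
merely picks the common value of `∫⁻ ω, μ S ω ∂P` over the `S ∈ 𝒳` with graph `G`. -/
def graphContent (P : Measure Ω) (X : Set (Ω → E)) (𝒳 : Set (CondRaw Ω E))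
    (μ : CondRaw Ω E → Ω → ℝ≥0∞) (G : Set ((Ω → E) × Ω)) : ℝ≥0∞ :=
  ⨅ S ∈ {S ∈ 𝒳 | HasGraph P X S G}, ∫⁻ ω, μ S ω ∂P

variable [SFinite P]

theorem HasGraph.mem_of_mem_graphs (h𝒳 : IsStableColl P X 𝒳) (hS : HasGraph P X S G)
    (hG : G ∈ graphs P X 𝒳) : S ∈ 𝒳 := by
  obtain ⟨T, hT, hTG⟩ := hG
  exact h𝒳.2.2.1 T hT S hS.isCond ((hTG.ceq_iff hS).2 .rfl)

theorem graphContent_eq (hμ : IsStableSetFun P 𝒳 μ) (hS𝒳 : S ∈ 𝒳) (hS : HasGraph P X S G) :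
    graphContent P X 𝒳 μ G = ∫⁻ ω, μ S ω ∂P := by
  refine le_antisymm (iInf₂_le S ⟨hS𝒳, hS⟩) (le_iInf₂ fun T ⟨hT𝒳, hT⟩ => ?_)
  exact (lintegral_congr_ae (hμ.2.1 S hS𝒳 T hT𝒳 ((hS.ceq_iff hT).2 .rfl))).le

theorem isSetRing_graphs (hX : Stable P X) (h𝒳 : IsStableRing P X 𝒳) :
    IsSetRing (graphs P X 𝒳) where
  empty_mem := by
    obtain ⟨S, hS⟩ := h𝒳.1.1
    have hSG := (h𝒳.1.2.1 S hS).hasGraph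
    exact ⟨_, (h𝒳.2 S hS S hS).1, inter_compl_self (graph P S) ▸ hSG.cInf₂ hX (hSG.ccompl hX)⟩
  union_mem := fun _ _ ⟨S, hS, hSG⟩ ⟨T, hT, hTH⟩ => ⟨_, (h𝒳.2 S hS T hT).2, hSG.cSup₂ hX hTH⟩
  sdiff_mem := fun _ _ ⟨S, hS, hSG⟩ ⟨T, hT, hTH⟩ =>
    ⟨_, (h𝒳.2 S hS T hT).1, hSG.cInf₂ hX (hTH.ccompl hX)⟩

theorem M1.ae_eq_zero (hμ : M1 P 𝒳 μ) (hS𝒳 : S ∈ 𝒳) (hS : HasGraph P X S ∅) : μ S =ᵐ[P] 0 := by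
  obtain ⟨x, hx⟩ := hS.isCond.1.1
  have hbase : ∀ᵐ ω ∂P, ω ∉ S.2 := by
    filter_upwards [hS.isCond.base_le_indBase hx,
      eventually_fiberAE.1 hS.graph_eq.le x (hS.isCond.2.1 hx)] with ω hω hempty hωS
    exact hempty (hω hωS)
  filter_upwards [hμ S hS𝒳, hbase] with ω hω hωS
  rw [hω, indicator_of_notMem hωS, Pi.zero_apply]

theorem graphContent_empty (hX : Stable P X) (h𝒳 : IsStableRing P X 𝒳)
    (hμ : IsStableMeasureOn P X 𝒳 μ) : graphContent P X 𝒳 μ ∅ = 0 := by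
  obtain ⟨S, hS𝒳, hS⟩ := (isSetRing_graphs hX h𝒳).empty_mem
  rw [graphContent_eq hμ.1 hS𝒳 hS, lintegral_congr_ae (hμ.2.1.ae_eq_zero hS𝒳 hS)]
  exact lintegral_zero

theorem graphContent_iUnion (hX : Stable P X) (h𝒳 : IsStableColl P X 𝒳)
    (hμ : IsStableMeasureOn P X 𝒳 μ) (G : ℕ → Set ((Ω → E) × Ω))
    (hG : ∀ n, G n ∈ graphs P X 𝒳) (hU : (⋃ n, G n) ∈ graphs P X 𝒳)
    (hd : Pairwise (Function.onFun Disjoint G)) :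
    graphContent P X 𝒳 μ (⋃ n, G n) = ∑' n, graphContent P X 𝒳 μ (G n) := by
  choose S hS𝒳 hS using hG
  have hsup := HasGraph.cSupFam hX hS
  have hsup𝒳 := hsup.mem_of_mem_graphs h𝒳 hU
  have hdisj : ∀ i j, i ≠ j → cdisjoint P X (S i) (S j) := fun i j hij =>
    ((hS i).cdisjoint_iff hX (hS j)).2 (hd hij).inter_eq.eventuallyEq
  calc graphContent P X 𝒳 μ (⋃ n, G n)
      = ∫⁻ ω, μ (cSupFam P X S) ω ∂P := graphContent_eq hμ.1 hsup𝒳 hsup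
    _ = ∫⁻ ω, ∑' n, μ (S n) ω ∂P := lintegral_congr_ae (hμ.2.2 S hS𝒳 hdisj hsup𝒳)
    _ = ∑' n, ∫⁻ ω, μ (S n) ω ∂P := lintegral_tsum fun n => (hμ.1.1 _ (hS𝒳 n)).aemeasurable
    _ = ∑' n, graphContent P X 𝒳 μ (G n) :=
      tsum_congr fun n => (graphContent_eq hμ.1 (hS𝒳 n) (hS n)).symm

theorem exists_hasGraph_inter_preimage (hX : Stable P X) (h𝒳 : IsStableRing P X 𝒳)
    (hμ : IsStableMeasureOn P X 𝒳 μ) (hS𝒳 : S ∈ 𝒳) (hS : HasGraph P X S G) {A : Set Ω}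
    (hA : MeasurableSet A) :
    ∃ T ∈ 𝒳, HasGraph P X T (G ∩ Prod.snd ⁻¹' A) ∧ μ T =ᵐ[P] A.indicator (μ S) := by
  classical
  obtain ⟨B, hB𝒳, hB⟩ := (isSetRing_graphs hX h𝒳).empty_mem
  set N : Ω → ℕ := A.piecewise (fun _ => 0) fun _ => 1
  have hN : Measurable N := measurable_const.piecewise hA measurable_const
  set R : ℕ → CondRaw Ω E := fun k => if k = 0 then S else B
  have hR𝒳 : ∀ k, R k ∈ 𝒳 := fun k => ite_mem.2 ⟨fun _ => hS𝒳, fun _ => hB𝒳⟩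
  have hR : ∀ k, HasGraph P X (R k) (if k = 0 then G else ∅) := fun k => by
    by_cases hk : k = 0 <;> simpa only [R, hk, if_true, if_false]
  refine ⟨condConcat P (.ofIndex P N hN) R, h𝒳.1.2.2.2 _ R hR𝒳, ?_, ?_⟩
  · convert HasGraph.condConcat hX (.ofIndex P N hN) hR using 1
    ext ⟨x, ω⟩
    by_cases hω : ω ∈ A <;> simp [Partition.ofIndex, N, hω]
  · filter_upwards [hμ.1.2.2 (.ofIndex P N hN) R hR𝒳, hμ.2.1.ae_eq_zero hB𝒳 hB] with ω hω hBω
    rw [hω, Partition.concat_ofIndex]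
    by_cases hωA : ω ∈ A <;> simp [N, R, hωA, hBω]

theorem graphContent_inter_preimage (hX : Stable P X) (h𝒳 : IsStableRing P X 𝒳)
    (hμ : IsStableMeasureOn P X 𝒳 μ) (hS𝒳 : S ∈ 𝒳) (hS : HasGraph P X S G) {A : Set Ω}
    (hA : MeasurableSet A) :
    graphContent P X 𝒳 μ (G ∩ Prod.snd ⁻¹' A) = ∫⁻ ω in A, μ S ω ∂P := by
  obtain ⟨T, hT𝒳, hT, hμT⟩ := exists_hasGraph_inter_preimage hX h𝒳 hμ hS𝒳 hS hA
  rw [graphContent_eq hμ.1 hT𝒳 hT, lintegral_congr_ae hμT, lintegral_indicator hA]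

theorem exists_measure_graph (hX : Stable P X) (h𝒳 : IsStableRing P X 𝒳)
    (hμ : IsStableMeasureOn P X 𝒳 μ) :
    ∃ (mC : MeasurableSpace ((Ω → E) × Ω)) (M : Measure ((Ω → E) × Ω)),
      Measurable (Prod.snd : (Ω → E) × Ω → Ω) ∧ ae M ≤ fiberAE P X ∧
      ∀ S ∈ 𝒳, MeasurableSet (graph P S) ∧
        ∀ A, MeasurableSet A → M (graph P S ∩ Prod.snd ⁻¹' A) = ∫⁻ ω in A, μ S ω ∂P := by
  have hring := isSetRing_graphs hX h𝒳
  obtain ⟨mC, M, hM, hmeas⟩ := exists_measure_eq_of_iUnion_eq_tsum hring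
    (graphContent_empty hX h𝒳 hμ) (graphContent_iUnion hX h𝒳.1 hμ)
  have hinter : ∀ S ∈ 𝒳, ∀ G, HasGraph P X S G → ∀ A, MeasurableSet A →
      G ∩ Prod.snd ⁻¹' A ∈ graphs P X 𝒳 := fun S hS𝒳 G hS A hA =>
    let ⟨T, hT𝒳, hT, _⟩ := exists_hasGraph_inter_preimage hX h𝒳 hμ hS𝒳 hS hA
    ⟨T, hT𝒳, hT⟩
  refine ⟨mC, M, fun A hA => hmeas _ fun G ⟨S, hS𝒳, hS⟩ => hinter S hS𝒳 G hS A hA,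
    fun N hN => ?_, fun S hS𝒳 => ?_⟩
  · obtain ⟨B, hB𝒳, hB⟩ := hring.empty_mem
    have hNB : HasGraph P X B Nᶜ := hB.congr (eventuallyEq_empty.2 (by simpa using hN)).symm
    rw [mem_ae_iff, (hM _ ⟨B, hB𝒳, hNB⟩).2, graphContent_eq hμ.1 hB𝒳 hNB,
      lintegral_congr_ae (hμ.2.1.ae_eq_zero hB𝒳 hB)]
    exact lintegral_zero
  · have hS := (h𝒳.1.2.1 S hS𝒳).hasGraph
    refine ⟨(hM _ ⟨S, hS𝒳, hS⟩).1, fun A hA => ?_⟩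
    rw [(hM _ (hinter S hS𝒳 _ hS A hA)).2, graphContent_inter_preimage hX h𝒳 hμ hS𝒳 hS hA]

end GraphContent

section FiberDensity

variable {α : Type*} {mα : MeasurableSpace α} {M : Measure α} {f : α → Ω} {G H : Set α}

/-- The density with respect to `P` of the image under `f` of the measure `M` restricted to `G`:
its value at `ω` plays the role of the mass of `G` in the fibre of `f` over `ω`. -/
def fiberDensity (f : α → Ω) (M : Measure α) (P : Measure Ω) (G : Set α) : Ω → ℝ≥0∞ :=
  ((M.restrict G).map f).rnDeriv P

theorem measurable_fiberDensity (f : α → Ω) (M : Measure α) (P : Measure Ω) (G : Set α) :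
    Measurable (fiberDensity f M P G) :=
  Measure.measurable_rnDeriv _ _

theorem fiberDensity_congr (h : G =ᵐ[M] H) : fiberDensity f M P G = fiberDensity f M P H := by
  rw [fiberDensity, Measure.restrict_congr_set h, fiberDensity]

variable [SigmaFinite P]

theorem setLIntegral_fiberDensity (hf : Measure.QuasiMeasurePreserving f M P) (G : Set α)
    {B : Set Ω} (hB : MeasurableSet B) :
    ∫⁻ ω in B, fiberDensity f M P G ω ∂P = M (f ⁻¹' B ∩ G) := by
  have hac : (M.restrict G).map f ≪ P :=
    (Measure.restrict_le_self.absolutelyContinuous.map hf.measurable).trans hf.absolutelyContinuous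
  have : SFinite ((M.restrict G).map f) := sFinite_of_absolutelyContinuous hac
  rw [fiberDensity, Measure.setLIntegral_rnDeriv hac, Measure.map_apply hf.measurable hB,
    Measure.restrict_apply (hf.measurable hB)]

theorem fiberDensity_ae_eqOn (hf : Measure.QuasiMeasurePreserving f M P) {A : Set Ω}
    (hA : MeasurableSet A) (h : (f ⁻¹' A ∩ G : Set α) =ᵐ[M] (f ⁻¹' A ∩ H : Set α)) :
    ∀ᵐ ω ∂P, ω ∈ A → fiberDensity f M P G ω = fiberDensity f M P H ω := by
  refine (ae_restrict_iff' hA).1 (ae_eq_of_forall_setLIntegral_eq_of_sigmaFinite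
    (measurable_fiberDensity f M P G) (measurable_fiberDensity f M P H) fun B hB _ => ?_)
  rw [Measure.restrict_restrict hB, setLIntegral_fiberDensity hf G (hB.inter hA),
    setLIntegral_fiberDensity hf H (hB.inter hA), preimage_inter, inter_assoc, inter_assoc]
  exact measure_congr (EventuallyEq.rfl.inter h)

theorem fiberDensity_iUnion [Countable ι] (hf : Measure.QuasiMeasurePreserving f M P)
    {G : ι → Set α} (hG : ∀ i, NullMeasurableSet (G i) M)
    (hd : Pairwise (Function.onFun (AEDisjoint M) G)) :
    fiberDensity f M P (⋃ i, G i) =ᵐ[P] fun ω => ∑' i, fiberDensity f M P (G i) ω := by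
  have hmeas := fun i => measurable_fiberDensity f M P (G i)
  refine ae_eq_of_forall_setLIntegral_eq_of_sigmaFinite (measurable_fiberDensity ..)
    (.tsum hmeas) fun B hB _ => ?_
  have hfB := (hf.measurable hB).nullMeasurableSet (μ := M)
  rw [lintegral_tsum fun i => (hmeas i).aemeasurable]
  simp only [setLIntegral_fiberDensity hf _ hB]
  rw [inter_iUnion, measure_iUnion₀ (fun i j hij => (hd hij).mono inter_subset_right
    inter_subset_right) fun i => hfB.inter (hG i)]

end FiberDensity

section GraphDensity

variable {X : Set (Ω → E)} {mC : MeasurableSpace ((Ω → E) × Ω)} {M : Measure ((Ω → E) × Ω)}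

theorem quasiMeasurePreserving_snd (hsnd : Measurable (Prod.snd : (Ω → E) × Ω → Ω))
    (hM : ae M ≤ fiberAE P X) : Measure.QuasiMeasurePreserving Prod.snd M P := by
  refine ⟨hsnd, .mk fun N hN hN0 => ?_⟩
  rw [Measure.map_apply hsnd hN, measure_eq_zero_iff_ae_notMem]
  exact hM (eventually_fiberAE_snd (measure_eq_zero_iff_ae_notMem.1 hN0))

/-- The conditional subsets of `X` whose graph is measurable up to an `M`-null set. -/
def nullMeasurableColl (P : Measure Ω) (X : Set (Ω → E)) {_ : MeasurableSpace ((Ω → E) × Ω)}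
    (M : Measure ((Ω → E) × Ω)) : Set (CondRaw Ω E) :=
  {S | IsCond P X S ∧ NullMeasurableSet (graph P S) M}

theorem HasGraph.mem_nullMeasurableColl {S : CondRaw Ω E} {G : Set ((Ω → E) × Ω)}
    (hS : HasGraph P X S G) (hM : ae M ≤ fiberAE P X) (hG : NullMeasurableSet G M) :
    S ∈ nullMeasurableColl P X M :=
  ⟨hS.isCond, hG.congr (EventuallyEq.symm (hM hS.graph_eq))⟩

theorem isStableSigma_nullMeasurableColl [SFinite P] (hX : Stable P X)
    (hsnd : Measurable (Prod.snd : (Ω → E) × Ω → Ω)) (hM : ae M ≤ fiberAE P X) :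
    IsStableSigma P X (nullMeasurableColl P X M) := by
  have htop : ctop X ∈ nullMeasurableColl P X M :=
    (hasGraph_ctop hX).mem_nullMeasurableColl hM .univ
  refine ⟨⟨⟨_, htop⟩, fun S hS => hS.1, fun S hS T hT hST => ?_, fun A S hS => ?_⟩, htop,
    fun S hS => ?_, fun S hS => ?_⟩
  · exact HasGraph.mem_nullMeasurableColl ⟨hT, ((ceq_iff_graph_eq hS.1 hT).1 hST).symm⟩ hM hS.2
  · refine (HasGraph.condConcat hX A fun k => (hS k).1.hasGraph).mem_nullMeasurableColl hM ?_
    exact .iUnion fun k => (hsnd (A.meas k)).nullMeasurableSet.inter (hS k).2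
  · exact (hS.1.hasGraph.ccompl hX).mem_nullMeasurableColl hM hS.2.compl
  · exact (HasGraph.cSupFam hX fun k => (hS k).1.hasGraph).mem_nullMeasurableColl hM
      (.iUnion fun k => (hS k).2)

variable [SigmaFinite P]

theorem isStableSetFun_fiberDensity (hX : Stable P X)
    (hsnd : Measurable (Prod.snd : (Ω → E) × Ω → Ω)) (hM : ae M ≤ fiberAE P X) :
    IsStableSetFun P {S | IsCond P X S} fun S => fiberDensity Prod.snd M P (graph P S) := by
  refine ⟨fun S _ => measurable_fiberDensity .., fun S hS T hT hST => ?_, fun A S hS => ?_⟩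
  · exact .of_eq (fiberDensity_congr (hM ((ceq_iff_graph_eq hS hT).1 hST)))
  · have hgraph := (HasGraph.condConcat hX A fun k => (hS k).hasGraph).graph_eq
    have hpart : ∀ k, ∀ᵐ ω ∂P, ω ∈ A.part k → fiberDensity Prod.snd M P
        (graph P (condConcat P A S)) ω = fiberDensity Prod.snd M P (graph P (S k)) ω := fun k => by
      refine fiberDensity_ae_eqOn (quasiMeasurePreserving_snd hsnd hM) (A.meas k) (hM ?_)
      refine eventuallyEq_set.2 ?_
      filter_upwards [hgraph.mem_iff, eventually_fiberAE_snd A.ae_unique] with p hp huniq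
      refine and_congr_right fun hpk => hp.trans (mem_iUnion.trans ⟨fun ⟨j, hj, hpj⟩ => ?_,
        fun hpk' => ⟨k, hpk, hpk'⟩⟩)
      exact huniq k j hpk hj ▸ hpj
    filter_upwards [ae_all_iff.2 hpart, A.ae_exists_mem,
      A.ae_concat_eq fun k => fiberDensity Prod.snd M P (graph P (S k))] with ω hω ⟨k, hk⟩ hA
    rw [hω k hk, hA k hk]

theorem M1_fiberDensity (hsnd : Measurable (Prod.snd : (Ω → E) × Ω → Ω))
    (hM : ae M ≤ fiberAE P X) :
    M1 P {S | IsCond P X S} fun S => fiberDensity Prod.snd M P (graph P S) := fun S hS => by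
  have hgraph : (Prod.snd ⁻¹' S.2ᶜ ∩ graph P S : Set _) =ᵐ[M] (Prod.snd ⁻¹' S.2ᶜ ∩ ∅ : Set _) := by
    refine hM (eventuallyEq_set.2 (eventually_fiberAE.2 fun x _ => ?_))
    filter_upwards [hS.indBase_le_base x] with ω hω
    exact ⟨fun h => (h.1 (hω h.2)).elim, fun h => h.2.elim⟩
  have hzero : fiberDensity Prod.snd M P (∅ : Set ((Ω → E) × Ω)) =ᵐ[P] 0 := by
    rw [fiberDensity, Measure.restrict_empty, Measure.map_zero]
    exact Measure.rnDeriv_zero P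
  filter_upwards [fiberDensity_ae_eqOn (quasiMeasurePreserving_snd hsnd hM) hS.2.2.compl hgraph,
    hzero] with ω hω hzero
  by_cases hωS : ω ∈ S.2
  · rw [indicator_of_mem hωS]
  · rw [indicator_of_notMem hωS, hω hωS, hzero, Pi.zero_apply]

theorem isStableMeasureOn_fiberDensity (hX : Stable P X)
    (hsnd : Measurable (Prod.snd : (Ω → E) × Ω → Ω)) (hM : ae M ≤ fiberAE P X) :
    IsStableMeasureOn P X (nullMeasurableColl P X M)
      fun S => fiberDensity Prod.snd M P (graph P S) := by
  have hset := isStableSetFun_fiberDensity hX hsnd hM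
  refine ⟨⟨fun S hS => hset.1 S hS.1, fun S hS T hT => hset.2.1 S hS.1 T hT.1,
    fun A S hS => hset.2.2 A S fun k => (hS k).1⟩, fun S hS => M1_fiberDensity hsnd hM S hS.1,
    fun S hS hd _ => ?_⟩
  have hgraph := (HasGraph.cSupFam hX fun k => (hS k).1.hasGraph).graph_eq
  have hdisj : Pairwise (Function.onFun (AEDisjoint M) fun k => graph P (S k)) := fun i j hij =>
    measure_eq_zero_iff_ae_notMem.2 (hM (eventuallyEq_empty.1
      (((hS i).1.hasGraph.cdisjoint_iff hX (hS j).1.hasGraph).1 (hd i j hij))))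
  simpa only [fiberDensity_congr (hM hgraph)] using
    fiberDensity_iUnion (quasiMeasurePreserving_snd hsnd hM) (fun k => (hS k).2) hdisj

end GraphDensity

theorem IsStableMeasureOn.mono {X : Set (Ω → E)} {𝒳 𝒴 : Set (CondRaw Ω E)}
    {μ : CondRaw Ω E → Ω → ℝ≥0∞} (hμ : IsStableMeasureOn P X 𝒴 μ) (h : 𝒳 ⊆ 𝒴) :
    IsStableMeasureOn P X 𝒳 μ :=
  ⟨⟨fun S hS => hμ.1.1 S (h hS), fun S hS T hT => hμ.1.2.1 S (h hS) T (h hT),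
    fun A S hS => hμ.1.2.2 A S fun k => h (hS k)⟩, fun S hS => hμ.2.1 S (h hS),
    fun S hS hd hsup => hμ.2.2 S (fun k => h (hS k)) hd (h hsup)⟩

theorem stable_caratheodory_extension_general {Ω E : Type*} {mΩ : MeasurableSpace Ω}
    (P : Measure Ω) [SigmaFinite P] (X : Set (Ω → E)) (hX : Stable P X)
    (𝒳 : Set (CondRaw Ω E)) (h𝒳 : IsStableRing P X 𝒳)
    (μ : CondRaw Ω E → Ω → ℝ≥0∞) (hμ : IsStableMeasureOn P X 𝒳 μ) :
    ∃ ν : CondRaw Ω E → Ω → ℝ≥0∞,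
      IsStableMeasureOn P X (sigmaGen P X 𝒳) ν ∧ ∀ S ∈ 𝒳, ν S =ᵐ[P] μ S := by
  obtain ⟨mC, M, hsnd, hM, hgraph⟩ := exists_measure_graph hX h𝒳 hμ
  have hν := isStableMeasureOn_fiberDensity hX hsnd hM
  have h𝒳M : 𝒳 ⊆ nullMeasurableColl P X M := fun S hS =>
    ⟨h𝒳.1.2.1 S hS, (hgraph S hS).1.nullMeasurableSet⟩
  have hσM : sigmaGen P X 𝒳 ⊆ nullMeasurableColl P X M :=
    sInter_subset_of_mem ⟨isStableSigma_nullMeasurableColl hX hsnd hM, h𝒳M⟩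
  refine ⟨_, hν.mono hσM, fun S hS => ?_⟩
  refine ae_eq_of_forall_setLIntegral_eq_of_sigmaFinite (hν.1.1 S (h𝒳M hS)) (hμ.1.1 S hS)
    fun A hA _ => ?_
  rw [setLIntegral_fiberDensity (quasiMeasurePreserving_snd hsnd hM) _ hA, inter_comm,
    (hgraph S hS).2 A hA]

end

/-- **Theorem 3.11 (conditional Carathéodory extension theorem).**  Every stable
pre-measure `μ` on a stable ring `𝒳` on a stable set `X` extends to a stable measure
`ν` on the stable σ-algebra `Σ(𝒳)` generated by `𝒳`. -/
theorem stable_caratheodory_extension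
    {Ω E : Type*} {mΩ : MeasurableSpace Ω} (P : @Measure Ω mΩ)
    [IsProbabilityMeasure P] (X : Set (Ω → E)) (hX : Stable P X)
    (𝒳 : Set (CondRaw Ω E)) (hring : IsStableRing P X 𝒳)
    (μ : CondRaw Ω E → Ω → ℝ≥0∞) (hμ : IsStableMeasureOn P X 𝒳 μ) :
    ∃ ν : CondRaw Ω E → Ω → ℝ≥0∞,
      IsStableMeasureOn P X (sigmaGen P X 𝒳) ν ∧ ∀ S ∈ 𝒳, ν S =ᵐ[P] μ S :=
  stable_caratheodory_extension_general P X hX 𝒳 hring μ hμ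

end CondMT
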